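/- arXiv:2604.06513 — 2 statements merged into one kernel-verified Lean document; each statement's English description precedes it below -/
import Mathlib

section
/- Let p be a prime and t ≥ 1. (a) If k is a positive divisor of p−1, then Spec(Γ(k, p^{kt})) ⊆ ℤ, where Γ(k, p^{kt}) is the generalized Paley graph over the field GaloisField p (k·t) with p^{kt} elements. (b) If k is a positive divisor of p+1, then Spec(Γ(k, p^{2t})) ⊆ ℤ, where Γ(k, p^{2t}) is the generalized Paley graph over the field GaloisField p (2t) with p^{2t} elements. -/
open scoped Classical

noncomputable instance (p n : ℕ) [Fact p.Prime] : Fintype (GaloisField p n) :=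
  Fintype.ofFinite _

/-!
The characters of a finite abelian group diagonalize the adjacency matrix of a Cayley digraph, so
the eigenvalues of `Γ(k, q)` are the character sums `∑ s ∈ R_k, ψ s`. Each is an algebraic integer,
because the values of `ψ` are roots of unity. If moreover `(p - 1) k ∣ q - 1`, then every element
of `𝔽_pˣ` is a `k`-th power in `𝔽_q`, so `R_k` is stable under scaling by `𝔽_pˣ`; averaging over
these scalings expresses the character sum through the sums of `ψ` over the lines `𝔽_p s`, which
are `0` or `p`, so it is also rational. The divisibility holds for `q = p ^ (k t)` because
`1 + p + ⋯ + p ^ (k - 1) ≡ k ≡ 0` modulo `k`, and for `q = p ^ (2 t)` because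
`p ^ 2 - 1 = (p - 1) (p + 1)`.
-/

section CayleyDigraph

variable {G : Type*} [AddCommGroup G] [Fintype G]

/-- The complex adjacency matrix of the Cayley digraph of `G` with connection set `S`, which has an
arc from `x` to `y` iff `y - x ∈ S`. -/
noncomputable def cayleyAdjMatrix (S : Finset G) : Matrix G G ℂ :=
  .of fun x y => if y - x ∈ S then 1 else 0

theorem cayleyAdjMatrix_mulVec_addChar (S : Finset G) (ψ : AddChar G ℂ) :
    (cayleyAdjMatrix S).mulVec ψ = (∑ s ∈ S, ψ s) • ⇑ψ := by
  funext x
  calc (cayleyAdjMatrix S).mulVec ψ x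
      = ∑ y, if y - x ∈ S then ψ y else 0 := by
        simp [cayleyAdjMatrix, Matrix.mulVec, dotProduct]
    _ = ∑ s, if s ∈ S then ψ (s + x) else 0 :=
        Fintype.sum_equiv (Equiv.subRight x) _ _ (by simp)
    _ = ((∑ s ∈ S, ψ s) • ⇑ψ) x := by
        simp [AddChar.map_add_eq_mul, Finset.sum_mul]

theorem spectrum_cayleyAdjMatrix (S : Finset G) :
    spectrum ℂ (cayleyAdjMatrix S) = Set.range fun ψ : AddChar G ℂ => ∑ s ∈ S, ψ s := by
  have diagonal_form : (cayleyAdjMatrix S).toLin' =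
      Matrix.toLin (AddChar.complexBasis G) (AddChar.complexBasis G)
        (.diagonal fun ψ => ∑ s ∈ S, ψ s) := by
    refine (AddChar.complexBasis G).ext fun ψ => ?_
    rw [Matrix.toLin_self, AddChar.complexBasis_apply, Matrix.toLin'_apply,
      cayleyAdjMatrix_mulVec_addChar]
    simp [Matrix.diagonal_apply]
  rw [← Matrix.spectrum_toLin', diagonal_form, Matrix.spectrum_toLin, spectrum_diagonal]

end CayleyDigraph

section CharacterSum

theorem isIntegral_addChar_apply {V R : Type*} [AddMonoid V] [CommRing R] (ψ : AddChar V R)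
    {v : V} (hv : IsOfFinAddOrder v) : IsIntegral ℤ (ψ v) := by
  refine IsIntegral.of_pow hv.addOrderOf_pos ?_
  rw [← AddChar.map_nsmul_eq_pow, addOrderOf_nsmul_eq_zero, AddChar.map_zero_eq_one]
  exact isIntegral_one

theorem isOfFinAddOrder_of_finite_scalars (K : Type*) {V : Type*} [Ring K] [Finite K]
    [AddCommGroup V] [Module K V] (v : V) : IsOfFinAddOrder v := by
  simpa using (LinearMap.toSpanSingleton K V v).toAddMonoidHom.isOfFinAddOrder
    (isOfFinAddOrder_of_finite (1 : K))

theorem exists_intCast_eq_sum_addChar_smul {K V R : Type*} [Ring K] [Fintype K] [AddCommGroup V]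
    [Module K V] [CommRing R] [IsDomain R] (ψ : AddChar V R) (v : V) :
    ∃ n : ℤ, (n : R) = ∑ c : K, ψ (c • v) := by
  let χ : AddChar K R := ψ.compAddMonoidHom (LinearMap.toSpanSingleton K V v).toAddMonoidHom
  refine ⟨if χ = 0 then Fintype.card K else 0, ?_⟩
  simpa [χ] using (AddChar.sum_eq_ite χ).symm

theorem sum_comp_smul_eq_sum {K V M : Type*} [GroupWithZero K] [MulAction K V] [AddCommMonoid M]
    {S : Finset V} (hS : ∀ c : K, c ≠ 0 → ∀ s ∈ S, c • s ∈ S) (f : V → M) {c : K} (hc : c ≠ 0) :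
    ∑ s ∈ S, f (c • s) = ∑ s ∈ S, f s :=
  Finset.sum_bij' (fun s _ => c • s) (fun s _ => c⁻¹ • s) (hS c hc) (hS _ (inv_ne_zero hc))
    (by simp [hc]) (by simp [hc]) (by simp)

theorem sum_sum_addChar_smul_eq {K V R : Type*} [DivisionRing K] [Fintype K] [AddCommGroup V]
    [Module K V] [CommRing R] {S : Finset V} (hS : ∀ c : K, c ≠ 0 → ∀ s ∈ S, c • s ∈ S)
    (ψ : AddChar V R) :
    ∑ s ∈ S, ∑ c : K, ψ (c • s) = S.card + (Fintype.card K - 1) * ∑ s ∈ S, ψ s := calc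
  _ = ∑ c : K, ∑ s ∈ S, ψ (c • s) := Finset.sum_comm
  _ = ∑ s ∈ S, ψ ((0 : K) • s) + ∑ c ∈ Finset.univ.erase (0 : K), ∑ s ∈ S, ψ (c • s) :=
    (Finset.add_sum_erase _ _ (Finset.mem_univ 0)).symm
  _ = ∑ s ∈ S, ψ ((0 : K) • s) + ∑ _c ∈ Finset.univ.erase (0 : K), ∑ s ∈ S, ψ s := by
    congr 1
    exact Finset.sum_congr rfl fun c hc => sum_comp_smul_eq_sum hS ψ (Finset.ne_of_mem_erase hc)
  _ = S.card + (Fintype.card K - 1) * ∑ s ∈ S, ψ s := by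
    simp [Finset.card_erase_of_mem, Nat.cast_sub Fintype.card_pos]

theorem exists_intCast_eq_sum_addChar {K V R : Type*} [DivisionRing K] [Finite K] [AddCommGroup V]
    [Module K V] [Field R] [CharZero R] {S : Finset V}
    (hS : ∀ c : K, c ≠ 0 → ∀ s ∈ S, c • s ∈ S) (ψ : AddChar V R) :
    ∃ n : ℤ, (n : R) = ∑ s ∈ S, ψ s := by
  have := Fintype.ofFinite K
  choose lineSum hlineSum using exists_intCast_eq_sum_addChar_smul (K := K) ψ
  have card_sub_one_ne_zero : (Fintype.card K - 1 : R) ≠ 0 :=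
    sub_ne_zero.mpr (by exact_mod_cast (Fintype.one_lt_card (α := K)).ne')
  have rational : ∑ s ∈ S, ψ s
      = ((∑ s ∈ S, (lineSum s : ℚ) - S.card) / (Fintype.card K - 1) : ℚ) := by
    push_cast
    rw [eq_div_iff card_sub_one_ne_zero, Finset.sum_congr rfl fun s _ => hlineSum s,
      sum_sum_addChar_smul_eq hS]
    ring
  have integral : IsIntegral ℤ (∑ s ∈ S, ψ s) :=
    IsIntegral.sum _ fun s _ => isIntegral_addChar_apply ψ (isOfFinAddOrder_of_finite_scalars K s)
  obtain ⟨n, hn⟩ := integral.exists_int_iff_exists_rat.mp ⟨_, rational⟩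
  exact ⟨n, hn.symm⟩

end CharacterSum

section PowersInFiniteFields

theorem range_powMonoidHom_eq_ker_powMonoidHom {G : Type*} [CommGroup G] [IsCyclic G] [Finite G]
    {k e : ℕ} (h : k * e = Nat.card G) :
    (powMonoidHom k : G →* G).range = (powMonoidHom e).ker := by
  have hk : 0 < k := Nat.pos_of_mul_pos_right (h ▸ Nat.card_pos)
  refine Subgroup.eq_of_le_of_card_ge ?_ ?_
  · rintro _ ⟨u, rfl⟩
    simp [MonoidHom.mem_ker, ← pow_mul, h]
  · rw [IsCyclic.card_powMonoidHom_range, IsCyclic.card_powMonoidHom_ker, ← h]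
    simp [hk]

/-- The set `R_k` of nonzero `k`-th powers, the connection set of the generalized Paley graph. -/
noncomputable def nonzeroPowers (F : Type*) [Field F] [Fintype F] (k : ℕ) : Finset F :=
  {s | ∃ z, z ≠ 0 ∧ z ^ k = s}

variable {K F : Type*} [Field K] [Field F] [Fintype F] [Algebra K F] {k : ℕ}

theorem algebraMap_mem_nonzeroPowers (hk : (Nat.card K - 1) * k ∣ Nat.card F - 1)
    {c : K} (hc : c ≠ 0) : algebraMap K F c ∈ nonzeroPowers F k := by
  obtain ⟨e, he⟩ := hk
  have card_units : k * ((Nat.card K - 1) * e) = Nat.card Fˣ := by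
    rw [Nat.card_units, he]
    ring
  let u : Kˣ := Units.mk0 c hc
  have pow_eq_one : u ^ ((Nat.card K - 1) * e) = 1 := by
    rw [pow_mul, ← Nat.card_units, pow_card_eq_one', one_pow]
  have mem_range : Units.map (algebraMap K F) u ∈ (powMonoidHom k : Fˣ →* Fˣ).range := by
    rw [range_powMonoidHom_eq_ker_powMonoidHom card_units, MonoidHom.mem_ker, powMonoidHom_apply,
      ← map_pow, pow_eq_one, map_one]
  obtain ⟨z, hz⟩ := mem_range
  simpa [nonzeroPowers] using ⟨z, z.ne_zero, congrArg Units.val hz⟩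

theorem smul_mem_nonzeroPowers (hk : (Nat.card K - 1) * k ∣ Nat.card F - 1)
    {c : K} (hc : c ≠ 0) {s : F} (hs : s ∈ nonzeroPowers F k) : c • s ∈ nonzeroPowers F k := by
  have hc' := algebraMap_mem_nonzeroPowers hk hc
  simp only [nonzeroPowers, Finset.mem_filter_univ] at hs hc' ⊢
  obtain ⟨z, hz, rfl⟩ := hs
  obtain ⟨w, hw, hwc⟩ := hc'
  exact ⟨w * z, mul_ne_zero hw hz, by rw [mul_pow, hwc, Algebra.smul_def]⟩

end PowersInFiniteFields

section Divisibility

theorem sub_one_mul_dvd_pow_self_sub_one {n k : ℕ} (hn : 1 ≤ n) (hk : k ∣ n - 1) :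
    (n - 1) * k ∣ n ^ k - 1 := by
  have hk' : (k : ℤ) ∣ n - 1 := by exact_mod_cast Int.natCast_dvd_natCast.mpr hk
  have dvd_geom_sum : (k : ℤ) ∣ ∑ i ∈ Finset.range k, (n : ℤ) ^ i := by
    simpa using dvd_geom_sum₂_self hk'
  have h : ((n : ℤ) - 1) * k ∣ n ^ k - 1 := mul_geom_sum (n : ℤ) k ▸ mul_dvd_mul_left _ dvd_geom_sum
  zify [hn, Nat.one_le_pow k n hn]
  exact h

theorem sub_one_mul_dvd_sq_sub_one {n k : ℕ} (hk : k ∣ n + 1) : (n - 1) * k ∣ n ^ 2 - 1 := by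
  have factor : n ^ 2 - 1 = (n - 1) * (n + 1) := by
    simpa [mul_comm] using Nat.sq_sub_sq n 1
  exact factor ▸ mul_dvd_mul_left _ hk

theorem card_zmod_sub_one_mul_dvd_card_galoisField_sub_one {p : ℕ} [Fact p.Prime] {k m t : ℕ}
    (hm : m ≠ 0) (ht : t ≠ 0) (h : (p - 1) * k ∣ p ^ m - 1) :
    (Nat.card (ZMod p) - 1) * k ∣ Nat.card (GaloisField p (m * t)) - 1 := by
  rw [Nat.card_zmod, GaloisField.card p _ (mul_ne_zero hm ht), pow_mul]
  exact h.trans (by simpa using Nat.sub_dvd_pow_sub_pow (p ^ m) 1 t)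

end Divisibility

theorem gpGraph_integral_families_basic_general {K F : Type*} [Field K] [Field F] [Fintype F]
    [Algebra K F] {k : ℕ} (hk : (Nat.card K - 1) * k ∣ Nat.card F - 1) (A : Matrix F F ℂ)
    (hA : ∀ x y, A x y = if ∃ z, z ≠ 0 ∧ z ^ k = y - x then 1 else 0) :
    spectrum ℂ A ⊆ Set.range ((↑) : ℤ → ℂ) := by
  have : Finite K := .of_injective _ (algebraMap K F).injective
  have A_eq : A = cayleyAdjMatrix (nonzeroPowers F k) := by
    ext x y
    simp [hA, cayleyAdjMatrix, nonzeroPowers]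
  rw [A_eq, spectrum_cayleyAdjMatrix]
  rintro _ ⟨ψ, rfl⟩
  exact exists_intCast_eq_sum_addChar (fun c hc s => smul_mem_nonzeroPowers (K := K) hk hc) ψ

theorem gpGraph_integral_families_basic
    (p : ℕ) [Fact p.Prime] (t : ℕ) (ht : 1 ≤ t) :
    (∀ k : ℕ, 0 < k → k ∣ p - 1 →
      ∀ A : Matrix (GaloisField p (k * t)) (GaloisField p (k * t)) ℂ,
        (∀ x y, A x y = if ∃ z, z ≠ 0 ∧ z ^ k = y - x then 1 else 0) →
        spectrum ℂ A ⊆ Set.range ((↑) : ℤ → ℂ)) ∧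
    (∀ k : ℕ, 0 < k → k ∣ p + 1 →
      ∀ A : Matrix (GaloisField p (2 * t)) (GaloisField p (2 * t)) ℂ,
        (∀ x y, A x y = if ∃ z, z ≠ 0 ∧ z ^ k = y - x then 1 else 0) →
        spectrum ℂ A ⊆ Set.range ((↑) : ℤ → ℂ)) := by
  have hp : 1 ≤ p := (Fact.out : p.Prime).one_le
  constructor
  · intro k hk hd
    exact gpGraph_integral_families_basic_general <|
      card_zmod_sub_one_mul_dvd_card_galoisField_sub_one hk.ne' (by lia)
        (sub_one_mul_dvd_pow_self_sub_one hp hd)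
  · intro k _ hd
    exact gpGraph_integral_families_basic_general <|
      card_zmod_sub_one_mul_dvd_card_galoisField_sub_one two_ne_zero (by lia)
        (sub_one_mul_dvd_sq_sub_one hd)
end

section
/- Let p be an odd prime, q = p^m with m ≥ 1, and let A be the adjacency matrix of the Paley graph Γ(2,q) (directed when q ≡ 3 mod 4). If p ≡ 1 (mod 4), then spectrum ℂ A = { (q−1)/2, (−1+√q)/2, (−1−√q)/2 } as a subset of ℂ, where √q is the positive real square root of q. If p ≡ 3 (mod 4), then spectrum ℂ A = { (q−1)/2, (−1 + i^m·√q)/2, (−1 − i^m·√q)/2 }, where i is the imaginary unit. -/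
open scoped Classical

/-!
The additive characters `ψ` of a finite abelian group form a basis of eigenvectors of every Cayley
matrix `(f (y - x))`, with eigenvalues the character sums `∑ g, f g * ψ g`. For the indicator of the
nonzero squares of `F_q`, which is `(1 + χ - δ₀) / 2` with `χ` the quadratic character, these sums
are `(q - 1) / 2` at the trivial character and `(-1 + gaussSum χ ψ) / 2` at all others. Every such
Gauss sum squares to `χ (-1) * q`, and rescaling `ψ` by a nonsquare changes its sign, so both square
roots occur.
-/

open Matrix

theorem spectrum_eq_range_of_basis_eigenvectors {K V ι : Type*} [Field K] [AddCommGroup V]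
    [Module K V] [Finite ι] (b : Module.Basis ι K V) (T : Module.End K V) (μ : ι → K)
    (hT : ∀ i, T (b i) = μ i • b i) : spectrum K T = Set.range μ := by
  cases nonempty_fintype ι
  have diagonal_toMatrix : LinearMap.toMatrix b b T = diagonal μ := by
    ext i j
    rw [LinearMap.toMatrix_apply, hT, map_smul, b.repr_self, Finsupp.smul_single, smul_eq_mul,
      mul_one, Finsupp.single_apply, diagonal_apply]
    grind
  rw [← LinearMap.spectrum_toMatrix T b, diagonal_toMatrix, spectrum_diagonal]

section CayleyMatrix

variable {G R : Type*} [AddCommGroup G]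

/-- The adjacency matrix of the weighted Cayley digraph on `G` in which the arc from `x` to `y` has
weight `f (y - x)`; an unweighted Cayley digraph is the case of an indicator function `f`. In terms
of `Matrix.circulant`, whose entries are `f (x - y)`, it is the transpose. -/
def cayleyMatrix (f : G → R) : Matrix G G R :=
  Matrix.of fun x y ↦ f (y - x)

theorem cayleyMatrix_mulVec_addChar [Fintype G] [CommSemiring R] (f : G → R) (ψ : AddChar G R) :
    cayleyMatrix f *ᵥ ψ = (∑ g, f g * ψ g) • ⇑ψ := by
  ext x
  calc ∑ y, f (y - x) * ψ y
      = ∑ g, f g * ψ (x + g) := by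
        rw [← Equiv.sum_comp (Equiv.addLeft x)]
        simp only [Equiv.coe_addLeft, add_sub_cancel_left]
    _ = (∑ g, f g * ψ g) * ψ x := by
        rw [Finset.sum_mul]
        exact Finset.sum_congr rfl fun g _ ↦ by rw [AddChar.map_add_eq_mul]; ring

theorem spectrum_cayleyMatrix [Fintype G] [DecidableEq G] (f : G → ℂ) :
    spectrum ℂ (cayleyMatrix f) = Set.range fun ψ : AddChar G ℂ ↦ ∑ g, f g * ψ g := by
  rw [← spectrum_toLin']
  refine spectrum_eq_range_of_basis_eigenvectors (AddChar.complexBasis G) _ _ fun ψ ↦ ?_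
  rw [AddChar.complexBasis_apply, toLin'_apply, cayleyMatrix_mulVec_addChar]

end CayleyMatrix

section FiniteField

theorem exists_unit_eq_neg_one_of_isQuadratic {S R : Type*} [CommRing S] [CommRing R]
    [Nontrivial R] {χ : MulChar S R} (hχ : χ ≠ 1) (hχ₂ : χ.IsQuadratic) : ∃ a : Sˣ, χ a = -1 := by
  obtain ⟨a, ha⟩ := MulChar.ne_one_iff.mp hχ
  have unit_value : χ a ≠ 0 := (a.isUnit.map χ).ne_zero
  exact ⟨a, ((hχ₂ a).resolve_left unit_value).resolve_left ha⟩

theorem exists_ne_zero_sq_eq_iff_isSquare {M : Type*} [MonoidWithZero M] {r : M} (hr : r ≠ 0) :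
    (∃ z : M, z ≠ 0 ∧ z ^ 2 = r) ↔ IsSquare r := by
  rw [isSquare_iff_exists_sq]
  constructor
  · rintro ⟨z, -, rfl⟩
    exact ⟨z, rfl⟩
  · rintro ⟨z, rfl⟩
    exact ⟨z, ne_zero_pow two_ne_zero hr, rfl⟩

variable {F R : Type*} [Field F] [Fintype F] [CommRing R]

theorem image_gaussSum_eq_pair_of_isQuadratic [IsDomain R] {χ : MulChar F R} (hχ : χ ≠ 1)
    (hχ₂ : χ.IsQuadratic) {ψ : AddChar F R} (hψ : ψ ≠ 1) {s : R}
    (hs : s ^ 2 = χ (-1) * Fintype.card F) :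
    gaussSum χ '' {φ | φ ≠ 1} = {s, -s} := by
  have eq_or_eq_neg {φ : AddChar F R} (hφ : φ ≠ 1) : gaussSum χ φ = s ∨ gaussSum χ φ = -s :=
    sq_eq_sq_iff_eq_or_eq_neg.mp <| by
      rw [gaussSum_sq hχ hχ₂ (AddChar.IsPrimitive.of_ne_one hφ), hs]
  obtain ⟨a, ha⟩ := exists_unit_eq_neg_one_of_isQuadratic hχ hχ₂
  have shift_ne_one : ψ.mulShift a ≠ 1 := AddChar.IsPrimitive.of_ne_one hψ a.ne_zero
  have gaussSum_shift : gaussSum χ (ψ.mulShift a) = -gaussSum χ ψ := by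
    rw [gaussSum_mulShift_eq, hχ₂.inv, ha, neg_one_mul]
  refine Set.Subset.antisymm (Set.image_subset_iff.mpr fun φ hφ ↦ eq_or_eq_neg hφ) ?_
  rcases eq_or_eq_neg hψ with h | h
  · exact Set.pair_subset ⟨ψ, hψ, h⟩ ⟨_, shift_ne_one, by rw [gaussSum_shift, h]⟩
  · exact Set.pair_subset ⟨_, shift_ne_one, by rw [gaussSum_shift, h, neg_neg]⟩ ⟨ψ, hψ, h⟩

variable [DecidableEq F]

variable (F R) in
/-- The quadratic character of `F`, with its values `0, 1, -1` taken in `R` instead of `ℤ`. -/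
def quadraticCharIn : MulChar F R :=
  (quadraticChar F).ringHomComp (Int.castRingHom R)

theorem quadraticCharIn_apply (r : F) : quadraticCharIn F R r = (quadraticChar F r : R) :=
  rfl

theorem quadraticCharIn_ne_one [CharZero R] (hF : ringChar F ≠ 2) : quadraticCharIn F R ≠ 1 :=
  (MulChar.ringHomComp_ne_one_iff (RingHom.injective_int _)).mpr (quadraticChar_ne_one hF)

theorem quadraticCharIn_isQuadratic : (quadraticCharIn F R).IsQuadratic :=
  (quadraticChar_isQuadratic F).comp _

theorem two_mul_ite_exists_ne_zero_sq_eq (r : F) :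
    2 * (if ∃ z : F, z ≠ 0 ∧ z ^ 2 = r then (1 : R) else 0) =
      1 + quadraticCharIn F R r - if r = 0 then 1 else 0 := by
  rcases eq_or_ne r 0 with rfl | hr
  · simp [quadraticCharIn_apply]
  · simp only [exists_ne_zero_sq_eq_iff_isSquare hr, quadraticCharIn_apply, if_neg hr]
    by_cases h : IsSquare r
    · rw [if_pos h, (quadraticChar_one_iff_isSquare hr).mpr h]
      push_cast
      ring
    · rw [if_neg h, quadraticChar_neg_one_iff_not_isSquare.mpr h]
      push_cast
      ring

theorem two_mul_sum_nonzero_squares_addChar (ψ : AddChar F R) :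
    2 * ∑ r : F, (if ∃ z : F, z ≠ 0 ∧ z ^ 2 = r then (1 : R) else 0) * ψ r =
      ∑ r, ψ r + gaussSum (quadraticCharIn F R) ψ - 1 := by
  have sum_delta : ∑ r : F, (if r = 0 then (1 : R) else 0) * ψ r = 1 := by simp
  simp only [Finset.mul_sum, ← mul_assoc, two_mul_ite_exists_ne_zero_sq_eq, sub_mul, add_mul,
    one_mul, Finset.sum_sub_distrib, Finset.sum_add_distrib, sum_delta, gaussSum]

end FiniteField

section PaleyMatrix

variable (F : Type*) [Field F] [Fintype F] [DecidableEq F]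

/-- The adjacency matrix of the Paley graph of `F`, with an arc from `x` to `y` when `y - x` is a
nonzero square. -/
def paleyMatrix : Matrix F F ℂ :=
  cayleyMatrix fun r : F ↦ if ∃ z : F, z ≠ 0 ∧ z ^ 2 = r then 1 else 0

theorem spectrum_paleyMatrix_eq_range_gaussSum :
    spectrum ℂ (paleyMatrix F) = Set.range fun ψ : AddChar F ℂ ↦
      (∑ r, ψ r + gaussSum (quadraticCharIn F ℂ) ψ - 1) / 2 := by
  rw [paleyMatrix, spectrum_cayleyMatrix]
  congr! 2 with ψ
  rw [← two_mul_sum_nonzero_squares_addChar, mul_div_cancel_left₀ _ two_ne_zero]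

variable {F}

theorem spectrum_paleyMatrix_eq_insert (hF : ringChar F ≠ 2) :
    spectrum ℂ (paleyMatrix F) = insert (((Fintype.card F : ℂ) - 1) / 2)
      ((fun γ : ℂ ↦ (-1 + γ) / 2) '' (gaussSum (quadraticCharIn F ℂ) '' {ψ | ψ ≠ 1})) := by
  have univ_eq : (Set.univ : Set (AddChar F ℂ)) = insert 1 {ψ | ψ ≠ 1} := by
    ext ψ
    simp [em]
  rw [spectrum_paleyMatrix_eq_range_gaussSum, ← Set.image_univ, univ_eq, Set.image_insert_eq,
    Set.image_image]
  congr 1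
  · simp [gaussSum_one_right (quadraticCharIn_ne_one hF)]
  · refine Set.image_congr fun ψ hψ ↦ ?_
    rw [AddChar.sum_eq_zero_of_ne_one hψ]
    ring

theorem spectrum_paleyMatrix (hF : ringChar F ≠ 2) {s : ℂ}
    (hs : s ^ 2 = (ZMod.χ₄ (Fintype.card F) : ℂ) * Fintype.card F) :
    spectrum ℂ (paleyMatrix F) =
      {((Fintype.card F : ℂ) - 1) / 2, (-1 + s) / 2, (-1 - s) / 2} := by
  obtain ⟨ψ, hψ⟩ : ∃ ψ : AddChar F ℂ, ψ 1 ≠ 1 := AddChar.exists_apply_ne_zero.mpr one_ne_zero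
  rw [← quadraticChar_neg_one hF, ← quadraticCharIn_apply] at hs
  have gaussSums := image_gaussSum_eq_pair_of_isQuadratic (quadraticCharIn_ne_one hF)
    quadraticCharIn_isQuadratic (AddChar.ne_one_iff.mpr ⟨1, hψ⟩) hs
  rw [spectrum_paleyMatrix_eq_insert hF, gaussSums, Set.image_pair, ← sub_eq_add_neg]

theorem spectrum_paleyMatrix_of_card_eq_pow {p m : ℕ} (hp : Odd p)
    (hF : Fintype.card F = p ^ m) {s : ℂ} (hs : s ^ 2 = (ZMod.χ₄ p : ℂ) ^ m * (p : ℂ) ^ m) :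
    spectrum ℂ (paleyMatrix F) =
      {((p ^ m - 1 : ℕ) : ℂ) / 2, (-1 + s) / 2, (-1 - s) / 2} := by
  have char_ne_two : ringChar F ≠ 2 := fun h ↦
    (Nat.not_even_iff_odd.mpr hp.pow) <| hF ▸ Nat.even_iff.mpr (FiniteField.even_card_of_char_two h)
  have s_sq : s ^ 2 = (ZMod.χ₄ (Fintype.card F) : ℂ) * Fintype.card F := by
    rw [hs, hF]
    push_cast [map_pow]
    rfl
  rw [spectrum_paleyMatrix char_ne_two s_sq, hF, Nat.cast_pred (Nat.pow_pos hp.pos)]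

end PaleyMatrix

theorem ofReal_sqrt_natCast_pow_sq (p m : ℕ) : (√((p : ℝ) ^ m) : ℂ) ^ 2 = (p : ℂ) ^ m := by
  rw [← Complex.ofReal_pow, Real.sq_sqrt (by positivity)]
  push_cast
  rfl

theorem paleyGraph_spectrum_general
    (p m : ℕ) (F : Type*) [Field F] [Fintype F] [DecidableEq F]
    (hF : Fintype.card F = p ^ m)
    (A : Matrix F F ℂ)
    (hA : ∀ x y : F, A x y = if ∃ z : F, z ≠ 0 ∧ z ^ 2 = y - x then 1 else 0) :
    (p % 4 = 1 →
      spectrum ℂ A =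
        {(((p ^ m - 1 : ℕ) : ℂ) / 2),
         ((-1 + (Real.sqrt ((p : ℝ) ^ m) : ℂ)) / 2),
         ((-1 - (Real.sqrt ((p : ℝ) ^ m) : ℂ)) / 2)}) ∧
    (p % 4 = 3 →
      spectrum ℂ A =
        {(((p ^ m - 1 : ℕ) : ℂ) / 2),
         ((-1 + Complex.I ^ m * (Real.sqrt ((p : ℝ) ^ m) : ℂ)) / 2),
         ((-1 - Complex.I ^ m * (Real.sqrt ((p : ℝ) ^ m) : ℂ)) / 2)}) := by
  obtain rfl : A = paleyMatrix F := Matrix.ext hA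
  refine ⟨fun h ↦ ?_, fun h ↦ ?_⟩ <;>
    refine spectrum_paleyMatrix_of_card_eq_pow (Nat.odd_iff.mpr (by lia)) hF ?_
  · rw [ofReal_sqrt_natCast_pow_sq, ZMod.χ₄_nat_one_mod_four h, Int.cast_one, one_pow, one_mul]
  · rw [mul_pow, ofReal_sqrt_natCast_pow_sq, ZMod.χ₄_nat_three_mod_four h, pow_right_comm,
      Complex.I_sq, Int.cast_neg, Int.cast_one]

theorem paleyGraph_spectrum
    (p m : ℕ) (hp : p.Prime) (hodd : Odd p) (hm : 1 ≤ m)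
    (F : Type*) [Field F] [Fintype F] [DecidableEq F]
    (hF : Fintype.card F = p ^ m)
    (A : Matrix F F ℂ)
    (hA : ∀ x y : F, A x y = if ∃ z : F, z ≠ 0 ∧ z ^ 2 = y - x then 1 else 0) :
    (p % 4 = 1 →
      spectrum ℂ A =
        {(((p ^ m - 1 : ℕ) : ℂ) / 2),
         ((-1 + (Real.sqrt ((p : ℝ) ^ m) : ℂ)) / 2),
         ((-1 - (Real.sqrt ((p : ℝ) ^ m) : ℂ)) / 2)}) ∧
    (p % 4 = 3 →
      spectrum ℂ A =
        {(((p ^ m - 1 : ℕ) : ℂ) / 2),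
         ((-1 + Complex.I ^ m * (Real.sqrt ((p : ℝ) ^ m) : ℂ)) / 2),
         ((-1 - Complex.I ^ m * (Real.sqrt ((p : ℝ) ^ m) : ℂ)) / 2)}) := by
  exact paleyGraph_spectrum_general p m F hF A hA
end
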